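/- Let H ∈ (1/2,1). For all s,t ≥ 0, ∫_0^{t∧s} K_H(t,r) K_H(s,r) dr = (1/2)(t^{2H} + s^{2H} − |t−s|^{2H}); that is, the kernel K_H factorizes the covariance function R_H(t,s) of fractional Brownian motion with Hurst index H. -/

import Mathlib

open MeasureTheory Set

/-- The Beta function, `B(a,b) = Γ(a)Γ(b)/Γ(a+b)`. -/
noncomputable def realBeta (a b : ℝ) : ℝ :=
  Real.Gamma a * Real.Gamma b / Real.Gamma (a + b)

/-- The normalizing constant `C_H = √(H(2H−1)/B(2−2H, H−1/2))`. -/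
noncomputable def CH (H : ℝ) : ℝ :=
  Real.sqrt (H * (2 * H - 1) / realBeta (2 - 2 * H) (H - 1 / 2))

/-- The kernel `K_H(t,s) = C_H s^{1/2−H} ∫_s^t (u−s)^{H−3/2} u^{H−1/2} du` for `s < t`,
and `K_H(t,s) = 0` for `s ≥ t`. -/
noncomputable def KH (H t s : ℝ) : ℝ :=
  if s < t then
    CH H * s ^ ((1:ℝ) / 2 - H) * ∫ u in s..t, (u - s) ^ (H - 3 / 2) * u ^ (H - 1 / 2)
  else 0

lemma lint_Ioo_aux {f : ℝ → ℝ} {a b : ℝ} (hab : a ≤ b) (hf : IntervalIntegrable f volume a b)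
    (hnn : ∀ x ∈ Ioo a b, 0 ≤ f x) :
    ∫⁻ x in Ioo a b, ENNReal.ofReal (f x) = ENNReal.ofReal (∫ x in a..b, f x) := by
  rw [intervalIntegral.integral_of_le hab, integral_Ioc_eq_integral_Ioo,
    ofReal_integral_eq_lintegral_ofReal]
  · exact ((intervalIntegrable_iff_integrableOn_Ioo_of_le hab).1 hf)
  · exact (ae_restrict_mem measurableSet_Ioo).mono hnn

lemma beta_lint_aux {α β : ℝ} (hα : 0 < α) (hβ : 0 < β) :
    ∫⁻ x in Ioo (0:ℝ) 1, ENNReal.ofReal (x ^ (α - 1) * (1 - x) ^ (β - 1))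
      = ENNReal.ofReal (realBeta α β) := by
  have hB : 0 < ProbabilityTheory.beta α β := ProbabilityTheory.beta_pos hα hβ
  have h := ProbabilityTheory.lintegral_betaPDF_eq_one hα hβ
  rw [ProbabilityTheory.lintegral_betaPDF] at h
  have e : realBeta α β = ProbabilityTheory.beta α β := rfl
  rw [e]
  have h2 : ∫⁻ x in Ioo (0:ℝ) 1, ENNReal.ofReal (x ^ (α - 1) * (1 - x) ^ (β - 1))
      = ∫⁻ x in Ioo (0:ℝ) 1, ENNReal.ofReal (ProbabilityTheory.beta α β) *
        ENNReal.ofReal (1 / ProbabilityTheory.beta α β * x ^ (α - 1) * (1 - x) ^ (β - 1)) := by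
    refine lintegral_congr fun x => ?_
    rw [← ENNReal.ofReal_mul hB.le]
    congr 1
    field_simp
  rw [h2, lintegral_const_mul _ (by fun_prop), h, mul_one]

lemma inner_lint_aux {a u v : ℝ} (ha : 0 < a) (ha2 : a < 1 / 2) (hu : 0 < u) (huv : u < v) :
    ∫⁻ r in Ioo (0:ℝ) u, ENNReal.ofReal (r ^ (-(2 * a)) * (u - r) ^ (a - 1) * (v - r) ^ (a - 1)
        * (u * v) ^ a)
      = ENNReal.ofReal (realBeta (1 - 2 * a) a * (v - u) ^ (2 * a - 1)) := by
  have hv : 0 < v := hu.trans huv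
  have hw : 0 < v - u := sub_pos.2 huv
  set f : ℝ → ℝ := fun x => x * (u * v) / (v - u + x * u) with hf
  set f' : ℝ → ℝ := fun x => u * v * (v - u) / (v - u + x * u) ^ 2 with hf'
  have hD : ∀ x ∈ Ioo (0:ℝ) 1, 0 < v - u + x * u := fun x hx => by
    have := mul_pos hx.1 hu; linarith
  have himg : f '' Ioo 0 1 = Ioo 0 u := by
    ext r
    constructor
    · rintro ⟨x, hx, rfl⟩
      have := hD x hx
      refine ⟨div_pos (mul_pos hx.1 (mul_pos hu hv)) this, ?_⟩
      rw [hf]; simp only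
      rw [div_lt_iff₀ this]
      have h1 : 0 < u * ((v - u) * (1 - x)) := mul_pos hu (mul_pos hw (sub_pos.2 hx.2))
      nlinarith
    · rintro ⟨h0, h1⟩
      have hvr : 0 < v - r := by linarith
      refine ⟨r * (v - u) / (u * (v - r)), ⟨by positivity, ?_⟩, ?_⟩
      · rw [div_lt_one (by positivity)]
        nlinarith
      · rw [hf]; simp only
        have : v - u + r * (v - u) / (u * (v - r)) * u = (v - u) * v / (v - r) := by
          field_simp; ring
        rw [this]
        field_simp
  have hder : ∀ x ∈ Ioo (0:ℝ) 1, HasDerivWithinAt f (f' x) (Ioo 0 1) x := fun x hx => by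
    have hx' := (hD x hx).ne'
    have h1 : HasDerivAt (fun x : ℝ => x * (u * v)) (u * v) x := by
      simpa using (hasDerivAt_id x).mul_const (u * v)
    have h2 : HasDerivAt (fun x : ℝ => v - u + x * u) u x := by
      simpa using ((hasDerivAt_id x).mul_const u).const_add (v - u)
    have h3 := h1.div h2 hx'
    refine (h3.congr_deriv ?_).hasDerivWithinAt
    rw [hf']; simp only
    congr 1; ring
  have hinj : InjOn f (Ioo 0 1) := by
    intro x hx y hy hxy
    have h1 := hD x hx
    have h2 := hD y hy
    simp only [hf] at hxy
    rw [div_eq_div_iff h1.ne' h2.ne'] at hxy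
    have : (x - y) * (u * v * (v - u)) = 0 := by linear_combination hxy
    have h3 : u * v * (v - u) ≠ 0 := by positivity
    have := (mul_eq_zero.1 this).resolve_right h3
    linarith
  rw [← himg, lintegral_image_eq_lintegral_abs_deriv_mul measurableSet_Ioo hder hinj]
  have key : ∀ x ∈ Ioo (0:ℝ) 1, ENNReal.ofReal |f' x| * ENNReal.ofReal
      (f x ^ (-(2 * a)) * (u - f x) ^ (a - 1) * (v - f x) ^ (a - 1) * (u * v) ^ a)
      = ENNReal.ofReal ((v - u) ^ (2 * a - 1)) *
        ENNReal.ofReal (x ^ (1 - 2 * a - 1) * (1 - x) ^ (a - 1)) := by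
    intro x hx
    have hDx := hD x hx
    have hx0 := hx.1
    have hx1 : 0 < 1 - x := sub_pos.2 hx.2
    rw [← ENNReal.ofReal_mul (abs_nonneg _), ← ENNReal.ofReal_mul (by positivity)]
    congr 1
    have e1 : u - f x = u * (v - u) * (1 - x) / (v - u + x * u) := by
      rw [hf]; simp only; field_simp; ring
    have e2 : v - f x = v * (v - u) / (v - u + x * u) := by
      rw [hf]; simp only; field_simp; ring
    have e3 : |f' x| = u * v * (v - u) / (v - u + x * u) ^ 2 := abs_of_pos (by positivity)
    rw [e1, e2, e3]
    simp only [hf]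
    set D := v - u + x * u with hDdef
    set w := v - u with hwdef
    have s1 : (1 - 2 * a - 1) = -(2 * a) := by ring
    rw [s1, Real.div_rpow (by positivity) hDx.le, Real.div_rpow (by positivity) hDx.le,
      Real.div_rpow (by positivity) hDx.le, Real.mul_rpow hx0.le (by positivity),
      Real.mul_rpow hu.le hv.le, Real.mul_rpow hu.le hv.le,
      Real.mul_rpow (by positivity) hx1.le, Real.mul_rpow hu.le hw.le, Real.mul_rpow hv.le hw.le]
    have p1 : ∀ y : ℝ, 0 < y → y ^ (-(2 * a)) = (y ^ a * y ^ a)⁻¹ := fun y hy => by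
      rw [Real.rpow_neg hy.le, ← Real.rpow_add hy]; congr 2; ring
    have p2 : ∀ y : ℝ, 0 < y → y ^ (a - 1) = y ^ a / y := fun y hy => by
      rw [Real.rpow_sub hy, Real.rpow_one]
    have p3 : w ^ (2 * a - 1) = w ^ a * w ^ a / w := by
      rw [Real.rpow_sub hw, Real.rpow_one, ← Real.rpow_add hw]; congr 2; ring
    rw [p1 u hu, p1 v hv, p1 D hDx, p2 u hu, p2 v hv, p2 w hw, p2 D hDx, p3]
    field_simp
  rw [setLIntegral_congr_fun measurableSet_Ioo key, lintegral_const_mul _ (by fun_prop),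
    beta_lint_aux (by linarith) ha, ← ENNReal.ofReal_mul (by positivity), mul_comm]

lemma abs_lint_aux {b v t : ℝ} (hb : -1 < b) (hv : 0 ≤ v) (hvt : v ≤ t) :
    ∫⁻ u in Ioo (0:ℝ) t, ENNReal.ofReal (|u - v| ^ b)
      = ENNReal.ofReal ((v ^ (b + 1) + (t - v) ^ (b + 1)) / (b + 1)) := by
  have hb1 : b + 1 ≠ 0 := by linarith
  have i1 : IntervalIntegrable (fun u => (v - u) ^ b) volume 0 v := by
    have := (intervalIntegral.intervalIntegrable_rpow' (a := v) (b := 0) hb).comp_sub_left v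
    simpa using this
  have i2 : IntervalIntegrable (fun u => (u - v) ^ b) volume v t := by
    have := (intervalIntegral.intervalIntegrable_rpow' (a := 0) (b := t - v) hb).comp_sub_right v
    simpa using this
  have c1 : ∀ u ∈ uIcc 0 v, (v - u) ^ b = |u - v| ^ b := fun u hu => by
    rw [uIcc_of_le hv] at hu
    rw [abs_sub_comm, abs_of_nonneg (sub_nonneg.2 hu.2)]
  have c2 : ∀ u ∈ uIcc v t, (u - v) ^ b = |u - v| ^ b := fun u hu => by
    rw [uIcc_of_le hvt] at hu
    rw [abs_of_nonneg (sub_nonneg.2 hu.1)]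
  have j1 : IntervalIntegrable (fun u => |u - v| ^ b) volume 0 v :=
    i1.congr fun u hu => c1 u (uIoc_subset_uIcc hu)
  have j2 : IntervalIntegrable (fun u => |u - v| ^ b) volume v t :=
    i2.congr fun u hu => c2 u (uIoc_subset_uIcc hu)
  rw [lint_Ioo_aux (hv.trans hvt) (j1.trans j2) (fun x _ => by positivity),
    ← intervalIntegral.integral_add_adjacent_intervals j1 j2,
    ← intervalIntegral.integral_congr c1, ← intervalIntegral.integral_congr c2,
    intervalIntegral.integral_comp_sub_left (fun x => x ^ b),
    intervalIntegral.integral_comp_sub_right (fun x => x ^ b),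
    integral_rpow (Or.inl hb), integral_rpow (Or.inl hb)]
  simp [Real.zero_rpow hb1]
  congr 1; ring

lemma double_lint_aux {b s t : ℝ} (hb : -1 < b) (hs : 0 ≤ s) (hst : s ≤ t) :
    ∫⁻ v in Ioo (0:ℝ) s, ∫⁻ u in Ioo (0:ℝ) t, ENNReal.ofReal (|u - v| ^ b)
      = ENNReal.ofReal ((s ^ (b + 2) + t ^ (b + 2) - (t - s) ^ (b + 2)) / ((b + 1) * (b + 2))) := by
  have hb1 : 0 < b + 1 := by linarith
  have hb2 : -1 < b + 1 := by linarith
  have hb3 : b + 2 ≠ 0 := by linarith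
  rw [setLIntegral_congr_fun measurableSet_Ioo
    (fun v hv => abs_lint_aux hb hv.1.le (hv.2.le.trans hst))]
  have i1 : IntervalIntegrable (fun v => v ^ (b + 1)) volume 0 s :=
    intervalIntegral.intervalIntegrable_rpow' hb2
  have i2 : IntervalIntegrable (fun v => (t - v) ^ (b + 1)) volume 0 s := by
    have := (intervalIntegral.intervalIntegrable_rpow' (a := t) (b := t - s) hb2).comp_sub_left t
    simpa using this
  rw [lint_Ioo_aux hs ((i1.add i2).div_const _), intervalIntegral.integral_div,
    intervalIntegral.integral_add i1 i2,
    intervalIntegral.integral_comp_sub_left (fun x => x ^ (b + 1)),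
    integral_rpow (Or.inl hb2), integral_rpow (Or.inl hb2)]
  · have : b + 1 + 1 = b + 2 := by ring
    rw [this, Real.zero_rpow hb3]
    congr 1
    simp
    field_simp
    ring
  · intro x hx
    have h1 := hx.1.le
    have h2 : 0 ≤ t - x := by linarith [hx.2]
    positivity

/-- The nonnegative kernel `(u-r)^(a-1) u^a r^(-a)` on `r < u`. -/
noncomputable def gkAux (a r u : ℝ) : ENNReal :=
  if r < u then ENNReal.ofReal ((u - r) ^ (a - 1) * u ^ a * r ^ (-a)) else 0

lemma gkAux_meas (a : ℝ) : Measurable (fun p : ℝ × ℝ => gkAux a p.1 p.2) :=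
  Measurable.ite (measurableSet_lt measurable_fst measurable_snd) (by fun_prop) measurable_const

lemma gkAux_lint {a r t : ℝ} (ha : 0 < a) (hr : 0 < r) (hrt : r < t) :
    ∫⁻ u in Ioo (0:ℝ) t, gkAux a r u
      = ENNReal.ofReal (r ^ (-a) * ∫ u in r..t, (u - r) ^ (a - 1) * u ^ a) := by
  have e : ∀ u, gkAux a r u = (Ioi r).indicator
      (fun u => ENNReal.ofReal ((u - r) ^ (a - 1) * u ^ a * r ^ (-a))) u := fun u => by
    simp [gkAux, indicator]
  have hset : Ioi r ∩ Ioo 0 t = Ioo r t := by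
    ext x; simp only [mem_inter_iff, mem_Ioi, mem_Ioo]
    constructor
    · rintro ⟨h1, h2, h3⟩; exact ⟨h1, h3⟩
    · rintro ⟨h1, h2⟩; exact ⟨h1, hr.trans h1, h2⟩
  simp_rw [e]
  rw [setLIntegral_indicator measurableSet_Ioi, hset]
  have i1 : IntervalIntegrable (fun u => (u - r) ^ (a - 1)) volume r t := by
    have := (intervalIntegral.intervalIntegrable_rpow' (a := 0) (b := t - r)
      (show -1 < a - 1 by linarith)).comp_sub_right r
    simpa using this
  have i2 : IntervalIntegrable (fun u => (u - r) ^ (a - 1) * u ^ a) volume r t :=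
    i1.mul_continuousOn (Real.continuous_rpow_const ha.le).continuousOn
  rw [lint_Ioo_aux hrt.le (i2.mul_const _), intervalIntegral.integral_mul_const, mul_comm]
  intro x hx
  have h1 : 0 < x - r := sub_pos.2 hx.1
  have h2 : 0 < x := hr.trans hx.1
  positivity

lemma KH_eq_aux {H r t : ℝ} (hH : 1 / 2 < H) (hr : 0 < r) (hrt : r < t) :
    KH H t r = CH H * (∫⁻ u in Ioo (0:ℝ) t, gkAux (H - 1 / 2) r u).toReal := by
  rw [gkAux_lint (by linarith) hr hrt, KH, if_pos hrt, ENNReal.toReal_ofReal]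
  · rw [mul_assoc]
    congr 3
    · ring
    · ext u; congr 2; ring
  · refine mul_nonneg (by positivity) (intervalIntegral.integral_nonneg hrt.le fun u hu => ?_)
    have h1 : 0 ≤ u - r := sub_nonneg.2 hu.1
    have h2 : 0 ≤ u := hr.le.trans hu.1
    positivity

lemma gk_prod_lt_aux {a s u v : ℝ} (ha : 0 < a) (ha2 : a < 1 / 2) (hu : 0 < u) (huv : u < v)
    (hus : u ≤ s) :
    ∫⁻ r in Ioo (0:ℝ) s, gkAux a r u * gkAux a r v
      = ENNReal.ofReal (realBeta (1 - 2 * a) a * (v - u) ^ (2 * a - 1)) := by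
  rw [← inner_lint_aux ha ha2 hu huv]
  have hset : Iio u ∩ Ioo 0 s = Ioo 0 u := by
    ext x; simp only [mem_inter_iff, mem_Iio, mem_Ioo]
    constructor
    · rintro ⟨h1, h2, h3⟩; exact ⟨h2, h1⟩
    · rintro ⟨h1, h2⟩; exact ⟨h2, h1, h2.trans_le hus⟩
  rw [← hset, ← setLIntegral_indicator measurableSet_Iio]
  refine setLIntegral_congr_fun measurableSet_Ioo fun r hr => ?_
  by_cases h : r < u
  · have hr0 := hr.1
    have h1 : 0 < u - r := sub_pos.2 h
    have h2 : 0 < v - r := sub_pos.2 (h.trans huv)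
    have hv := hu.trans huv
    simp only [gkAux, h, h.trans huv, if_true, indicator, mem_Iio]
    rw [← ENNReal.ofReal_mul (by positivity)]
    congr 1
    have : r ^ (-(2 * a)) = r ^ (-a) * r ^ (-a) := by
      rw [← Real.rpow_add hr0]; congr 1; ring
    rw [this, Real.mul_rpow hu.le hv.le]
    ring
  · simp [gkAux, h, indicator]

lemma gk_prod_aux {a s u v : ℝ} (ha : 0 < a) (ha2 : a < 1 / 2) (hu : 0 < u) (hv : 0 < v)
    (hvs : v ≤ s) (huv : u ≠ v) :
    ∫⁻ r in Ioo (0:ℝ) s, gkAux a r u * gkAux a r v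
      = ENNReal.ofReal (realBeta (1 - 2 * a) a) * ENNReal.ofReal (|u - v| ^ (2 * a - 1)) := by
  have hB : 0 < realBeta (1 - 2 * a) a := ProbabilityTheory.beta_pos (by linarith) ha
  rw [← ENNReal.ofReal_mul hB.le]
  rcases lt_or_gt_of_ne huv with h | h
  · rw [gk_prod_lt_aux ha ha2 hu h (h.le.trans hvs), abs_sub_comm, abs_of_pos (sub_pos.2 h)]
  · rw [abs_of_pos (sub_pos.2 h), ← gk_prod_lt_aux ha ha2 hv h hvs]
    simp_rw [mul_comm]

lemma triple_lint_aux {a s t : ℝ} (ha : 0 < a) (ha2 : a < 1 / 2) (hs : 0 ≤ s) (hst : s ≤ t) :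
    ∫⁻ r in Ioo (0:ℝ) s, (∫⁻ u in Ioo (0:ℝ) t, gkAux a r u) * (∫⁻ v in Ioo (0:ℝ) s, gkAux a r v)
      = ENNReal.ofReal (realBeta (1 - 2 * a) a) * ENNReal.ofReal
        ((s ^ (2 * a + 1) + t ^ (2 * a + 1) - (t - s) ^ (2 * a + 1)) / (2 * a * (2 * a + 1))) := by
  have hm := gkAux_meas a
  have hm1 : ∀ r, Measurable (gkAux a r) := fun r => hm.comp measurable_prodMk_left
  have step1 : ∀ r, (∫⁻ u in Ioo (0:ℝ) t, gkAux a r u) * (∫⁻ v in Ioo (0:ℝ) s, gkAux a r v)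
      = ∫⁻ v in Ioo (0:ℝ) s, ∫⁻ u in Ioo (0:ℝ) t, gkAux a r u * gkAux a r v := fun r => by
    rw [mul_comm, ← lintegral_lintegral_mul (hm1 r).aemeasurable (hm1 r).aemeasurable]
    simp_rw [mul_comm]
  simp_rw [step1]
  have hmA : Measurable (fun p : (ℝ × ℝ) × ℝ => gkAux a p.1.1 p.2 * gkAux a p.1.1 p.1.2) :=
    (hm.comp (measurable_fst.fst.prodMk measurable_snd)).mul (hm.comp measurable_fst)
  rw [lintegral_lintegral_swap (hmA.lintegral_prod_right').aemeasurable]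
  have step2 : ∀ v ∈ Ioo (0:ℝ) s,
      ∫⁻ r in Ioo (0:ℝ) s, ∫⁻ u in Ioo (0:ℝ) t, gkAux a r u * gkAux a r v
      = ENNReal.ofReal (realBeta (1 - 2 * a) a) *
        ∫⁻ u in Ioo (0:ℝ) t, ENNReal.ofReal (|u - v| ^ (2 * a - 1)) := by
    intro v hv
    have hmB : Measurable (fun p : ℝ × ℝ => gkAux a p.1 p.2 * gkAux a p.1 v) :=
      hm.mul (hm.comp (measurable_fst.prodMk measurable_const))
    rw [lintegral_lintegral_swap hmB.aemeasurable, ← lintegral_const_mul _ (by fun_prop)]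
    refine lintegral_congr_ae ?_
    have hne : ∀ᵐ u ∂(volume.restrict (Ioo (0:ℝ) t)), u ≠ v :=
      ae_restrict_of_ae (Measure.ae_ne volume v)
    filter_upwards [hne, ae_restrict_mem measurableSet_Ioo] with u hu1 hu2
    exact gk_prod_aux ha ha2 hu2.1 hv.1 hv.2.le hu1
  have hmC : Measurable (fun p : ℝ × ℝ => ENNReal.ofReal (|p.2 - p.1| ^ (2 * a - 1))) := by
    fun_prop
  rw [setLIntegral_congr_fun measurableSet_Ioo step2,
    lintegral_const_mul _ hmC.lintegral_prod_right',
    double_lint_aux (by linarith) hs hst]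
  congr 3
  · ring_nf
  · ring

lemma KH_fact_aux (H : ℝ) (hH : 1 / 2 < H) (hH1 : H < 1) (s t : ℝ) (hs : 0 ≤ s) (hst : s ≤ t) :
    ∫ r in (0:ℝ)..s, KH H t r * KH H s r
      = (1 / 2) * (t ^ (2 * H) + s ^ (2 * H) - (t - s) ^ (2 * H)) := by
  have ha : 0 < H - 1 / 2 := by linarith
  have ha2 : H - 1 / 2 < 1 / 2 := by linarith
  have hm := gkAux_meas (H - 1 / 2)
  have hB : 0 < realBeta (2 - 2 * H) (H - 1 / 2) := ProbabilityTheory.beta_pos (by linarith) ha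
  have hC : CH H ^ 2 = H * (2 * H - 1) / realBeta (2 - 2 * H) (H - 1 / 2) := by
    rw [CH, Real.sq_sqrt]
    exact div_nonneg (mul_nonneg (by linarith) (by linarith)) hB.le
  have e : ∀ r ∈ Ioo (0:ℝ) s, KH H t r * KH H s r = CH H ^ 2 *
      ((∫⁻ u in Ioo (0:ℝ) t, gkAux (H - 1 / 2) r u) *
        (∫⁻ v in Ioo (0:ℝ) s, gkAux (H - 1 / 2) r v)).toReal := fun r hr => by
    rw [KH_eq_aux hH hr.1 (hr.2.trans_le hst), KH_eq_aux hH hr.1 hr.2, ENNReal.toReal_mul]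
    ring
  have hnn : 0 ≤ s ^ (2 * H) + t ^ (2 * H) - (t - s) ^ (2 * H) := by
    have h1 : (t - s) ^ (2 * H) ≤ t ^ (2 * H) :=
      Real.rpow_le_rpow (by linarith) (by linarith) (by linarith)
    have h2 : 0 ≤ s ^ (2 * H) := by positivity
    linarith
  rw [intervalIntegral.integral_of_le hs, integral_Ioc_eq_integral_Ioo,
    setIntegral_congr_fun measurableSet_Ioo e, integral_const_mul, integral_toReal,
    triple_lint_aux ha ha2 hs hst, ENNReal.toReal_mul, hC]
  · have e1 : 1 - 2 * (H - 1 / 2) = 2 - 2 * H := by ring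
    have e2 : 2 * (H - 1 / 2) + 1 = 2 * H := by ring
    have e3 : 2 * (H - 1 / 2) = 2 * H - 1 := by ring
    have h4 : 0 < 2 * H - 1 := by linarith
    have h5 : 0 < H := by linarith
    rw [e1, e2, e3, ENNReal.toReal_ofReal hB.le, ENNReal.toReal_ofReal (by positivity)]
    generalize realBeta (2 - 2 * H) (H - 1 / 2) = B at hB
    generalize s ^ (2 * H) = x
    generalize t ^ (2 * H) = y
    generalize (t - s) ^ (2 * H) = z
    have h6 : 2 * H - 1 ≠ 0 := h4.ne'
    generalize 2 * H - 1 = c at h6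
    field_simp
    ring
  · exact (hm.lintegral_prod_right'.mul hm.lintegral_prod_right').aemeasurable
  · filter_upwards [ae_restrict_mem measurableSet_Ioo] with r hr
    rw [gkAux_lint ha hr.1 (hr.2.trans_le hst), gkAux_lint ha hr.1 hr.2]
    exact ENNReal.mul_lt_top ENNReal.ofReal_lt_top ENNReal.ofReal_lt_top

/-- The kernel `K_H` factorizes the covariance function of fractional Brownian motion:
`∫_0^{t∧s} K_H(t,r) K_H(s,r) dr = (1/2)(t^{2H} + s^{2H} − |t−s|^{2H})`. -/
theorem KH_factorizes_covariance
    (H : ℝ) (hH : 1 / 2 < H) (hH1 : H < 1) (s t : ℝ) (hs : 0 ≤ s) (ht : 0 ≤ t) :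
    ∫ r in (0:ℝ)..(min t s), KH H t r * KH H s r
      = (1 / 2) * (t ^ (2 * H) + s ^ (2 * H) - |t - s| ^ (2 * H)) := by
  rcases le_total s t with h | h
  · rw [min_eq_right h, abs_of_nonneg (sub_nonneg.2 h)]
    exact KH_fact_aux H hH hH1 s t hs h
  · rw [min_eq_left h, abs_sub_comm, abs_of_nonneg (sub_nonneg.2 h)]
    simp_rw [mul_comm (KH H t _)]
    rw [KH_fact_aux H hH hH1 t s ht h]
    ring
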